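/- Suppose σ ≥ 2 L_H, δ_g ≤ 9 δ_H² / (4σ), |f1 - f0 - ⟨g, η⟩ - (1/2)⟨A η, η⟩| ≤ (L_H/2)‖η‖³, ‖G - g‖ ≤ δ_g, and ‖(H - A) η‖ ≤ δ_H ‖η‖. If ‖η‖ ≥ 9 δ_H / σ, then f1 - f0 - m(η) ≤ 0. (Implication (11) in the proof of Lemma 3.3.) -/

import Mathlib

open RealInnerProductSpace

/-!
The change `f1 - f0` exceeds the model by at most the gradient error `δ_g * ‖η‖`, the Hessian
error `δ_H / 2 * ‖η‖ ^ 2` and the Taylor error `L / 2 * ‖η‖ ^ 3`, less the regularization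
`σ / 3 * ‖η‖ ^ 3`. On a step with `9 * δ_H ≤ σ * ‖η‖` the three errors are at most `1 / 36`,
`1 / 18` and `1 / 4` of `σ * ‖η‖ ^ 3`, and these fractions add up to exactly `1 / 3`.
-/

section CubicModel

variable {E : Type*} [SeminormedAddCommGroup E] [InnerProductSpace ℝ E]

/-- The cubic-regularized second-order model of the change of a function along a step, with gradient
`G`, Hessian `H` and regularization parameter `σ`. The constant term is omitted, so the model
vanishes at `0`. -/
noncomputable def cubicModel (G : E) (H : E →ₗ[ℝ] E) (σ : ℝ) (ξ : E) : ℝ :=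
  ⟪G, ξ⟫ + (1 / 2) * ⟪H ξ, ξ⟫ + (σ / 3) * ‖ξ‖ ^ 3

theorem real_inner_le_mul_norm_of_norm_le {x : E} {c : ℝ} (hx : ‖x‖ ≤ c) (y : E) :
    ⟪x, y⟫ ≤ c * ‖y‖ :=
  (real_inner_le_norm x y).trans (by gcongr)

theorem sub_cubicModel_le {G g η : E} {H A : E →ₗ[ℝ] E} (σ : ℝ) {L δ_g δ_H f0 f1 : ℝ}
    (hTaylor : f1 - f0 - ⟪g, η⟫ - (1 / 2) * ⟪A η, η⟫ ≤ (L / 2) * ‖η‖ ^ 3)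
    (hG : ‖G - g‖ ≤ δ_g) (hH : ‖(H - A) η‖ ≤ δ_H * ‖η‖) :
    f1 - f0 - cubicModel G H σ η
      ≤ δ_g * ‖η‖ + δ_H / 2 * ‖η‖ ^ 2 + (L / 2) * ‖η‖ ^ 3 - (σ / 3) * ‖η‖ ^ 3 := by
  have gradient_error : ⟪g, η⟫ - ⟪G, η⟫ ≤ δ_g * ‖η‖ := by
    rw [← inner_sub_left]
    exact real_inner_le_mul_norm_of_norm_le (norm_sub_rev G g ▸ hG) η
  have hessian_error : ⟪A η, η⟫ - ⟪H η, η⟫ ≤ δ_H * ‖η‖ * ‖η‖ := by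
    rw [← inner_sub_left]
    exact real_inner_le_mul_norm_of_norm_le (norm_sub_rev (H η) (A η) ▸ hH) η
  unfold cubicModel
  linarith

theorem gradient_error_add_hessian_error_le {σ δ_g δ_H t : ℝ} (hσ : 0 < σ) (hδ_H : 0 ≤ δ_H)
    (hδ : δ_g ≤ 9 * δ_H ^ 2 / (4 * σ)) (ht : 9 * δ_H / σ ≤ t) :
    δ_g * t + δ_H / 2 * t ^ 2 ≤ σ / 12 * t ^ 3 := by
  have t_nonneg : 0 ≤ t := le_trans (by positivity) ht
  have δ_H_le : δ_H ≤ σ * t / 9 := by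
    rw [div_le_iff₀ hσ] at ht
    linarith
  have δ_g_le : δ_g ≤ σ * t ^ 2 / 36 :=
    calc δ_g ≤ 9 * δ_H ^ 2 / (4 * σ) := hδ
      _ ≤ 9 * (σ * t / 9) ^ 2 / (4 * σ) := by gcongr
      _ = σ * t ^ 2 / 36 := by field_simp; ring
  calc δ_g * t + δ_H / 2 * t ^ 2
      ≤ σ * t ^ 2 / 36 * t + σ * t / 9 / 2 * t ^ 2 := by gcongr
    _ = σ / 12 * t ^ 3 := by ring

theorem long_step_model_overestimates_general {G g η : E} {H A : E →ₗ[ℝ] E}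
    {σ L δ_g δ_H f0 f1 : ℝ} (hσ : 0 < σ) (hδ_H : 0 ≤ δ_H)
    (hσL : 2 * L ≤ σ) (hδ : δ_g ≤ 9 * δ_H ^ 2 / (4 * σ))
    (hTaylor : f1 - f0 - ⟪g, η⟫ - (1 / 2) * ⟪A η, η⟫ ≤ (L / 2) * ‖η‖ ^ 3)
    (hG : ‖G - g‖ ≤ δ_g) (hH : ‖(H - A) η‖ ≤ δ_H * ‖η‖) (hlong : 9 * δ_H / σ ≤ ‖η‖) :
    f1 - f0 - cubicModel G H σ η ≤ 0 := by
  have taylor_error : (L / 2) * ‖η‖ ^ 3 ≤ (σ / 4) * ‖η‖ ^ 3 := by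
    gcongr ?_ * ‖η‖ ^ 3
    linarith
  linarith [sub_cubicModel_le σ hTaylor hG hH,
    gradient_error_add_hessian_error_le hσ hδ_H hδ hlong]

end CubicModel

/-- Implication (11) in the proof of Lemma 3.3: if the step is long enough,
the model overestimates the actual decrease. -/
theorem long_step_model_overestimates
    {E : Type*} [NormedAddCommGroup E] [InnerProductSpace ℝ E] [FiniteDimensional ℝ E]
    (G g η : E) (H A : E →L[ℝ] E) (hH : IsSelfAdjoint H) (hA : IsSelfAdjoint A)
    (σ L_H δ_g δ_H : ℝ) (hσ : 0 < σ) (hL : 0 < L_H)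
    (hδg : δ_g ∈ Set.Ioo (0 : ℝ) 1) (hδH : δ_H ∈ Set.Ioo (0 : ℝ) 1)
    (m : E → ℝ)
    (hm : ∀ ξ : E, m ξ = ⟪G, ξ⟫ + (1 / 2) * ⟪H ξ, ξ⟫ + (σ / 3) * ‖ξ‖ ^ 3)
    (f0 f1 : ℝ)
    (hσL : σ ≥ 2 * L_H)
    (hδgH : δ_g ≤ 9 * δ_H ^ 2 / (4 * σ))
    (hTaylor : |f1 - f0 - ⟪g, η⟫ - (1 / 2) * ⟪A η, η⟫| ≤ (L_H / 2) * ‖η‖ ^ 3)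
    (hG : ‖G - g‖ ≤ δ_g)
    (hHa : ‖(H - A) η‖ ≤ δ_H * ‖η‖)
    (hlong : ‖η‖ ≥ 9 * δ_H / σ) :
    f1 - f0 - m η ≤ 0 := by
  rw [show m η = cubicModel G H σ η from hm η]
  exact long_step_model_overestimates_general hσ hδH.1.le hσL hδgH
    (abs_le.mp hTaylor).2 hG hHa hlong
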